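/- arXiv:2107.07799 — 3 statements merged into one kernel-verified Lean document; each statement's English description precedes it below -/
import Mathlib

section
/- Assume K ≥ 2, p ≥ 1, that each empirical covariance matrix S^(k) ∈ ℝ^{p×p} (k = 1,…,K) is symmetric positive semidefinite with strictly positive diagonal entries, that n_k > 0 for each k, and that λ₁ > 0 and λ₂ ≥ 0. Then the group joint graphical lasso objective F attains its infimum over K-tuples of symmetric positive definite p×p matrices, and the minimizer is unique. -/
open Matrix Finset

/-- The group joint graphical lasso objective on `K`-tuples of `p × p` matrices. -/
noncomputable def groupJGL {p K : ℕ} (n : Fin K → ℝ) (S : Fin K → Matrix (Fin p) (Fin p) ℝ)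
    (l1 l2 : ℝ) (Θ : Fin K → Matrix (Fin p) (Fin p) ℝ) : ℝ :=
  (∑ k, n k * (-Real.log (Θ k).det + (S k * Θ k).trace))
    + l1 * ∑ k, ∑ i, ∑ j, (if i ≠ j then |Θ k i j| else 0)
    + l2 * ∑ i, ∑ j, (if i ≠ j then Real.sqrt (∑ k, (Θ k i j) ^ 2) else 0)

/-!
Uniqueness: `log det` is strictly concave on positive definite matrices, because it lies strictly
below its tangents, which after a congruence is the inequality `log x < x - 1` (`x ≠ 1`) for the
eigenvalues. The trace terms are linear and the penalties are sums of seminorms, so the objective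
is strictly convex.

Existence: the objective tends to infinity along the cocompact filter of the space of tuples of
positive definite matrices. It dominates a weighted sum of single-class graphical lasso objectives,
so one class suffices. There, as `S` has positive diagonal and the off-diagonal entries are
penalised, the trace and penalty terms control `c * T.trace` for some `c > 0`, even when `S` is
singular. Since `log det T` grows more slowly than `c / 2 * T.trace`, a bound on the objective
bounds `T.trace` from above and `T.det` away from `0`, and this confines `T` to a compact set of
positive definite matrices.
-/

open Filter Topology

section Convexity

lemma strictConvexOn_smul {𝕜 β E : Type*} [CommSemiring 𝕜] [PartialOrder 𝕜] [AddCommMonoid β]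
    [PartialOrder β] [Module 𝕜 β] [PosSMulStrictMono 𝕜 β] [AddCommMonoid E] [SMul 𝕜 E]
    {s : Set E} {f : E → β} {c : 𝕜} (hc : 0 < c) (hf : StrictConvexOn 𝕜 s f) :
    StrictConvexOn 𝕜 s fun x => c • f x := by
  refine ⟨hf.1, fun x hx y hy hxy a b ha hb hab => ?_⟩
  calc c • f (a • x + b • y) < c • (a • f x + b • f y) :=
        smul_lt_smul_of_pos_left (hf.2 hx hy hxy ha hb hab) hc
    _ = a • c • f x + b • c • f y := by rw [smul_add, smul_comm c, smul_comm c]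

variable {ι 𝕜 β : Type*} [Semiring 𝕜] [PartialOrder 𝕜] [AddCommMonoid β] [PartialOrder β]
  [Module 𝕜 β]

lemma convexOn_sum [IsOrderedAddMonoid β] {E : Type*} [AddCommMonoid E] [SMul 𝕜 E] {s : Set E}
    (hs : Convex 𝕜 s) (t : Finset ι) {f : ι → E → β} (hf : ∀ i ∈ t, ConvexOn 𝕜 s (f i)) :
    ConvexOn 𝕜 s fun x => ∑ i ∈ t, f i x := by
  refine ⟨hs, fun x hx y hy a b ha hb hab => ?_⟩
  rw [smul_sum, smul_sum, ← sum_add_distrib]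
  exact sum_le_sum fun i hi => (hf i hi).2 hx hy ha hb hab

lemma strictConvexOn_sum_apply [Fintype ι] [IsOrderedCancelAddMonoid β] {E : ι → Type*}
    [∀ i, AddCommMonoid (E i)] [∀ i, Module 𝕜 (E i)] {s : ∀ i, Set (E i)} {f : ∀ i, E i → β}
    (hf : ∀ i, StrictConvexOn 𝕜 (s i) (f i)) :
    StrictConvexOn 𝕜 (Set.univ.pi s) fun x => ∑ i, f i (x i) := by
  refine ⟨convex_pi fun i _ => (hf i).1, fun x hx y hy hxy a b ha hb hab => ?_⟩
  obtain ⟨i, hi⟩ := Function.ne_iff.mp hxy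
  simp only [Set.mem_univ_pi] at hx hy
  rw [smul_sum, smul_sum, ← sum_add_distrib]
  exact sum_lt_sum (fun j _ => (hf j).convexOn.2 (hx j) (hy j) ha.le hb.le hab)
    ⟨i, mem_univ i, (hf i).2 (hx i) (hy i) hi ha hb hab⟩

end Convexity

section Coercivity

lemma bddBelow_range_of_tendsto_cocompact_atTop {X α : Type*} [TopologicalSpace X]
    [TopologicalSpace α] [LinearOrder α] [ClosedIicTopology α] [Nonempty α] {f : X → α}
    (hf : Continuous f) (hlim : Tendsto f (cocompact X) atTop) : BddBelow (Set.range f) := by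
  cases isEmpty_or_nonempty X
  · simp only [Set.range_eq_empty, bddBelow_empty]
  · obtain ⟨x, hx⟩ := hf.exists_forall_le hlim
    exact ⟨f x, Set.forall_mem_range.mpr hx⟩

lemma tendsto_sum_apply_cocompact_atTop {ι : Type*} [Fintype ι] {X : ι → Type*}
    [∀ i, TopologicalSpace (X i)] {α : Type*} [AddCommGroup α] [PartialOrder α]
    [IsOrderedAddMonoid α] {f : ∀ i, X i → α} (hbdd : ∀ i, BddBelow (Set.range (f i)))
    (hlim : ∀ i, Tendsto (f i) (cocompact (X i)) atTop) :
    Tendsto (fun x : ∀ i, X i => ∑ i, f i (x i)) (cocompact (∀ i, X i)) atTop := by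
  choose b hb using hbdd
  rw [← coprodᵢ_cocompact, Filter.coprodᵢ, tendsto_iSup]
  intro i
  have lower_bound (x : ∀ i, X i) : f i (x i) + (-b i + ∑ j, b j) ≤ ∑ j, f j (x j) := by
    rw [← add_assoc, ← sub_eq_add_neg, ← le_sub_iff_add_le, ← sum_sub_distrib]
    exact single_le_sum (f := fun j => f j (x j) - b j)
      (fun j _ => sub_nonneg.mpr (hb j ⟨x j, rfl⟩)) (mem_univ i)
  exact tendsto_atTop_mono lower_bound
    (tendsto_atTop_add_const_right _ _ ((hlim i).comp tendsto_comap))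

end Coercivity

section PositiveSemidefinite

variable {m 𝕜 : Type*} [RCLike 𝕜]

open scoped ComplexOrder

lemma convex_posDef : Convex ℝ {A : Matrix m m 𝕜 | A.PosDef} :=
  convex_iff_forall_pos.mpr fun _ hA _ hB _ _ ha hb _ => (hA.smul ha).add (hB.smul hb)

lemma isClosed_posSemidef [Finite m] : IsClosed {T : Matrix m m 𝕜 | T.PosSemidef} := by
  cases nonempty_fintype m
  simp only [posSemidef_iff_dotProduct_mulVec, Matrix.IsHermitian, Set.ofPred_and,
    Set.ofPred_forall]
  exact (isClosed_eq (by fun_prop) (by fun_prop)).inter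
    (isClosed_iInter fun x => isClosed_le (by fun_prop) (by fun_prop))

variable [Fintype m]

open scoped MatrixOrder in
lemma trace_mul_nonneg_of_posSemidef {S T : Matrix m m 𝕜} (hS : S.PosSemidef)
    (hT : T.PosSemidef) : 0 ≤ (S * T).trace := by
  classical
  obtain ⟨B, rfl⟩ := CStarAlgebra.nonneg_iff_eq_star_mul_self.mp hS.nonneg
  rw [star_eq_conjTranspose, ← trace_mul_cycle]
  exact (hT.mul_mul_conjTranspose_same B).trace_nonneg

lemma abs_apply_le_trace_of_posSemidef {T : Matrix m m ℝ} (hT : T.PosSemidef) (i j : m) :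
    |T i j| ≤ T.trace := by
  classical
  have diag_le (i : m) : T i i ≤ T.trace :=
    single_le_sum (f := fun i => T i i) (fun _ _ => hT.diag_nonneg) (mem_univ i)
  have symm : T j i = T i j := by simpa using hT.1.apply i j
  have quadForm_add : 0 ≤ T i i + T j j + 2 * T i j := by
    have := hT.dotProduct_mulVec_nonneg (Pi.single i 1 + Pi.single j 1)
    simp only [star_trivial, mulVec_add, mulVec_single, MulOpposite.op_one, one_smul,
      dotProduct_add, add_dotProduct, single_dotProduct, col_apply, one_mul, symm] at this
    linarith
  have quadForm_sub : 0 ≤ T i i + T j j - 2 * T i j := by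
    have := hT.dotProduct_mulVec_nonneg (Pi.single i 1 - Pi.single j 1)
    simp only [star_trivial, mulVec_sub, mulVec_single, MulOpposite.op_one, one_smul,
      dotProduct_sub, sub_dotProduct, single_dotProduct, col_apply, one_mul, symm] at this
    linarith
  rw [abs_le]
  constructor <;> linarith [diag_le i, diag_le j]

lemma isCompact_posSemidef_trace_le_le_det [DecidableEq m] (M d : ℝ) :
    IsCompact {T : Matrix m m ℝ | T.PosSemidef ∧ T.trace ≤ M ∧ d ≤ T.det} := by
  have box : IsCompact (Set.univ.pi fun _ : m => Set.univ.pi fun _ : m => Set.Icc (-M) M) :=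
    isCompact_univ_pi fun _ => isCompact_univ_pi fun _ => isCompact_Icc
  refine box.of_isClosed_subset ?_ ?_
  · exact isClosed_posSemidef.inter
      ((isClosed_le continuous_id.matrix_trace continuous_const).inter
        (isClosed_le continuous_const continuous_id.matrix_det))
  · rintro T ⟨hT, htrace, -⟩ i - j -
    exact abs_le.mp ((abs_apply_le_trace_of_posSemidef hT i j).trans htrace)

end PositiveSemidefinite

section LogDet

variable {m : Type*} [Fintype m] [DecidableEq m] {A M : Matrix m m ℝ}

lemma eq_one_of_forall_eigenvalues_eq_one (hA : A.IsHermitian) (h : ∀ i, hA.eigenvalues i = 1) :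
    A = 1 := by
  rw [hA.spectral_theorem, funext h]
  simp

lemma log_det_lt_trace_sub_card (hA : A.PosDef) (hne : A ≠ 1) :
    Real.log A.det < A.trace - Fintype.card m := by
  obtain ⟨i, hi⟩ : ∃ i, hA.1.eigenvalues i ≠ 1 := by
    by_contra! h
    exact hne (eq_one_of_forall_eigenvalues_eq_one hA.1 h)
  calc Real.log A.det = ∑ i, Real.log (hA.1.eigenvalues i) := by
        rw [hA.1.det_eq_prod_eigenvalues]
        exact Real.log_prod fun i _ => (hA.eigenvalues_pos i).ne'
    _ < ∑ i, (hA.1.eigenvalues i - 1) :=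
        sum_lt_sum (fun j _ => Real.log_le_sub_one_of_pos (hA.eigenvalues_pos j))
          ⟨i, mem_univ i, Real.log_lt_sub_one_of_pos (hA.eigenvalues_pos i) hi⟩
    _ = A.trace - Fintype.card m := by
        rw [hA.1.trace_eq_sum_eigenvalues]
        simp

lemma log_det_le_trace_sub_card (hA : A.PosDef) : Real.log A.det ≤ A.trace - Fintype.card m := by
  rcases eq_or_ne A 1 with rfl | hne
  · simp
  · exact (log_det_lt_trace_sub_card hA hne).le

lemma log_det_le_mul_trace_sub {c : ℝ} (hc : 0 < c) (hA : A.PosDef) :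
    Real.log A.det ≤ c * A.trace - Fintype.card m * (1 + Real.log c) := by
  have h := log_det_le_trace_sub_card (hA.smul hc)
  rw [det_smul, trace_smul, Real.log_mul (by positivity) hA.det_pos.ne', Real.log_pow,
    smul_eq_mul] at h
  linarith

-- Writing `M⁻¹ = star B * B`, this is `log det X < tr X - card m` for `X = B * A * star B`.
open scoped MatrixOrder in
lemma log_det_lt_log_det_add_trace_inv_mul_sub (hA : A.PosDef) (hM : M.PosDef) (hne : A ≠ M) :
    Real.log A.det < Real.log M.det + (M⁻¹ * (A - M)).trace := by
  obtain ⟨B, hB⟩ := CStarAlgebra.nonneg_iff_eq_star_mul_self.mp hM.inv.posSemidef.nonneg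
  have hB_unit : IsUnit B := by
    have h : IsUnit (star B * B) := hB ▸ hM.inv.isUnit
    exact isUnit_of_mul_isUnit_right h
  have inv_mul : M⁻¹ * M = 1 := nonsing_inv_mul _ hM.det_pos.ne'.isUnit
  have conj_posDef : (B * A * star B).PosDef :=
    (IsUnit.posDef_star_right_conjugate_iff hB_unit).mpr hA
  have conj_ne_one : B * A * star B ≠ 1 := by
    intro h
    rw [mul_assoc, mul_eq_one_comm, mul_assoc, ← hB] at h
    exact hne (left_inv_eq_right_inv h inv_mul)
  have log_det_conj : Real.log (B * A * star B).det = Real.log A.det - Real.log M.det := by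
    have det_conj : (B * A * star B).det = A.det * M⁻¹.det := by
      rw [hB, det_mul, det_mul, det_mul]; ring
    rw [det_conj, Real.log_mul hA.det_pos.ne' hM.inv.det_pos.ne', det_nonsing_inv,
      Ring.inverse_eq_inv', Real.log_inv, sub_eq_add_neg]
  have trace_conj : (B * A * star B).trace = (M⁻¹ * A).trace := by
    rw [hB, trace_mul_cycle]
  have trace_sub : (M⁻¹ * (A - M)).trace = (M⁻¹ * A).trace - Fintype.card m := by
    rw [mul_sub, inv_mul, Matrix.trace_sub, trace_one]
  have := log_det_lt_trace_sub_card conj_posDef conj_ne_one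
  linarith

lemma strictConcaveOn_log_det :
    StrictConcaveOn ℝ {A : Matrix m m ℝ | A.PosDef} fun A => Real.log A.det := by
  refine ⟨convex_posDef, fun A hA B hB hne a b ha hb hab => ?_⟩
  set M := a • A + b • B with hM_def
  have hM : M.PosDef := convex_posDef hA hB ha.le hb.le hab
  have hAM : A ≠ M := fun h => hne (left_mem_openSegment_iff.mp ⟨a, b, ha, hb, hab, h.symm⟩)
  have hBM : B ≠ M := fun h => hne (right_mem_openSegment_iff.mp ⟨a, b, ha, hb, hab, h.symm⟩)
  have cancel : a * (M⁻¹ * (A - M)).trace + b * (M⁻¹ * (B - M)).trace = 0 := by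
    have h : a • (A - M) + b • (B - M) = 0 := by
      rw [smul_sub, smul_sub, sub_add_sub_comm, ← hM_def, ← add_smul, hab, one_smul, sub_self]
    simpa only [mul_add, mul_smul_comm, Matrix.trace_add, trace_smul, smul_eq_mul, mul_zero,
      Matrix.trace_zero] using congrArg (fun X => (M⁻¹ * X).trace) h
  simp only [smul_eq_mul]
  calc a * Real.log A.det + b * Real.log B.det
      < a * (Real.log M.det + (M⁻¹ * (A - M)).trace)
        + b * (Real.log M.det + (M⁻¹ * (B - M)).trace) := by
        gcongr
        · exact log_det_lt_log_det_add_trace_inv_mul_sub hA hM hAM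
        · exact log_det_lt_log_det_add_trace_inv_mul_sub hB hM hBM
    _ = (a + b) * Real.log M.det := by linear_combination cancel
    _ = Real.log M.det := by rw [hab, one_mul]

lemma tendsto_mul_trace_sub_log_det_cocompact_atTop {c : ℝ} (hc : 0 < c) :
    Tendsto (fun T : {T : Matrix m m ℝ // T.PosDef} => c * T.1.trace - Real.log T.1.det)
      (cocompact _) atTop := by
  refine tendsto_atTop.mpr fun b => ?_
  set e : ℝ := Fintype.card m * (1 + Real.log (c / 2))
  set U := {T : Matrix m m ℝ | T.PosSemidef ∧ T.trace ≤ (b - e) / (c / 2) ∧ Real.exp (-b) ≤ T.det}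
  have hU_range : U ⊆ Set.range (Subtype.val : {T : Matrix m m ℝ // T.PosDef} → _) := by
    rintro T ⟨hT, -, hdet⟩
    exact ⟨⟨T, hT.posDef_iff_det_ne_zero.mpr ((Real.exp_pos _).trans_le hdet).ne'⟩, rfl⟩
  have hU_compact := IsInducing.subtypeVal.isCompact_preimage'
    (isCompact_posSemidef_trace_le_le_det _ _) hU_range
  filter_upwards [hU_compact.compl_mem_cocompact] with T hT
  contrapose! hT
  have log_det_le := log_det_le_mul_trace_sub (half_pos hc) T.2
  have trace_nonneg := T.2.posSemidef.trace_nonneg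
  refine not_not_intro ⟨T.2.posSemidef, ?_, ?_⟩
  · rw [le_div_iff₀ (half_pos hc)]; linarith
  · rw [← Real.le_log_iff_exp_le T.2.det_pos]; nlinarith

end LogDet

section GraphicalLasso

variable {m κ : Type*} [Fintype m] [DecidableEq m] [Fintype κ]

lemma convexOn_sum_offDiag {E : Type*} [AddCommMonoid E] [Module ℝ E] {f : m → m → E → ℝ}
    (hf : ∀ i j, ConvexOn ℝ Set.univ (f i j)) :
    ConvexOn ℝ Set.univ fun x => ∑ i, ∑ j, if i ≠ j then f i j x else 0 := by
  refine convexOn_sum convex_univ _ fun i _ => convexOn_sum convex_univ _ fun j _ => ?_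
  split_ifs
  · exact hf i j
  · exact convexOn_const 0 convex_univ

lemma continuous_sum_offDiag {E : Type*} [TopologicalSpace E] {f : m → m → E → ℝ}
    (hf : ∀ i j, Continuous (f i j)) :
    Continuous fun x => ∑ i, ∑ j, if i ≠ j then f i j x else 0 := by
  refine continuous_finsetSum _ fun i _ => continuous_finsetSum _ fun j _ => ?_
  split_ifs
  · exact hf i j
  · exact continuous_const

/-- The lasso penalty: the `ℓ¹` norm of the off-diagonal part of a matrix. -/
def offDiagL1Norm (T : Matrix m m ℝ) : ℝ := ∑ i, ∑ j, if i ≠ j then |T i j| else 0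

lemma offDiagL1Norm_nonneg (T : Matrix m m ℝ) : 0 ≤ offDiagL1Norm T := by
  unfold offDiagL1Norm
  positivity

lemma convexOn_offDiagL1Norm : ConvexOn ℝ Set.univ (offDiagL1Norm (m := m)) :=
  convexOn_sum_offDiag fun i j => (convexOn_univ_norm (E := ℝ)).comp_linearMap
    (entryLinearMap ℝ ℝ i j)

lemma continuous_offDiagL1Norm : Continuous (offDiagL1Norm (m := m)) :=
  continuous_sum_offDiag fun _ _ => by fun_prop

/-- The group lasso penalty on tuples of matrices: the `ℓ¹` sum over off-diagonal positions of the
Euclidean norms of the vectors collecting the entries of all the matrices at that position. -/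
noncomputable def offDiagGroupNorm (Θ : κ → Matrix m m ℝ) : ℝ :=
  ∑ i, ∑ j, if i ≠ j then Real.sqrt (∑ k, (Θ k i j) ^ 2) else 0

lemma offDiagGroupNorm_nonneg (Θ : κ → Matrix m m ℝ) : 0 ≤ offDiagGroupNorm Θ := by
  unfold offDiagGroupNorm
  positivity

lemma convexOn_offDiagGroupNorm :
    ConvexOn ℝ Set.univ (offDiagGroupNorm : (κ → Matrix m m ℝ) → ℝ) := by
  refine convexOn_sum_offDiag fun i j => ?_
  let entries : (κ → Matrix m m ℝ) →ₗ[ℝ] EuclideanSpace ℝ κ :=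
    (WithLp.linearEquiv 2 ℝ (κ → ℝ)).symm.toLinearMap ∘ₗ
      LinearMap.pi fun k => entryLinearMap ℝ ℝ i j ∘ₗ LinearMap.proj k
  have norm_entries (Θ : κ → Matrix m m ℝ) : ‖entries Θ‖ = Real.sqrt (∑ k, (Θ k i j) ^ 2) := by
    simp [entries, EuclideanSpace.norm_eq]
  simpa only [Function.comp_def, norm_entries, Set.preimage_univ]
    using (convexOn_univ_norm (E := EuclideanSpace ℝ κ)).comp_linearMap entries

lemma continuous_offDiagGroupNorm :
    Continuous (offDiagGroupNorm : (κ → Matrix m m ℝ) → ℝ) :=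
  continuous_sum_offDiag fun _ _ => by fun_prop

/-- The graphical lasso objective of a single class, with empirical covariance matrix `S` and
penalty parameter `ρ` on the off-diagonal entries. -/
noncomputable def graphicalLasso (S : Matrix m m ℝ) (ρ : ℝ) (T : Matrix m m ℝ) : ℝ :=
  -Real.log T.det + (S * T).trace + ρ * offDiagL1Norm T

lemma strictConvexOn_graphicalLasso (S : Matrix m m ℝ) {ρ : ℝ} (hρ : 0 ≤ ρ) :
    StrictConvexOn ℝ {T : Matrix m m ℝ | T.PosDef} (graphicalLasso S ρ) := by
  have linear : ConvexOn ℝ {T : Matrix m m ℝ | T.PosDef} fun T => (S * T).trace :=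
    (traceLinearMap m ℝ ℝ ∘ₗ LinearMap.mulLeft ℝ S).convexOn convex_posDef
  have penalty : ConvexOn ℝ {T : Matrix m m ℝ | T.PosDef} fun T => ρ * offDiagL1Norm T :=
    (convexOn_offDiagL1Norm.subset (Set.subset_univ _) convex_posDef).smul hρ
  exact (strictConcaveOn_log_det.neg.add_convexOn linear).add_convexOn penalty

lemma continuous_graphicalLasso (S : Matrix m m ℝ) (ρ : ℝ) :
    Continuous fun T : {T : Matrix m m ℝ // T.PosDef} => graphicalLasso S ρ T := by
  have log_det : Continuous fun T : {T : Matrix m m ℝ // T.PosDef} => Real.log T.1.det :=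
    continuous_subtype_val.matrix_det.log fun T => T.2.det_pos.ne'
  have penalty := (continuous_offDiagL1Norm (m := m)).comp
    (continuous_subtype_val (p := Matrix.PosDef))
  exact (log_det.neg.add (by fun_prop)).add (continuous_const.mul penalty)

lemma mul_trace_le_trace_mul_add_offDiagL1Norm {S T : Matrix m m ℝ} {d M : ℝ} (hd : ∀ i, d ≤ S i i)
    (hM : ∀ i j, |S i j| ≤ M) (hT : T.PosSemidef) :
    d * T.trace ≤ (S * T).trace + M * offDiagL1Norm T := by
  have entry_bound (i j : m) :
      (if i = j then d * T i i else 0) ≤ S i j * T j i + M * if i ≠ j then |T i j| else 0 := by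
    rcases eq_or_ne i j with rfl | hij
    · simpa using mul_le_mul_of_nonneg_right (hd i) hT.diag_nonneg
    · have symm : T j i = T i j := by simpa using hT.1.apply i j
      have h_abs : -(S i j * T i j) ≤ M * |T i j| := calc
        -(S i j * T i j) ≤ |S i j * T i j| := neg_le_abs _
        _ = |S i j| * |T i j| := abs_mul _ _
        _ ≤ M * |T i j| := by gcongr; exact hM i j
      simp only [hij, if_false, ne_eq, not_false_eq_true, if_true, symm]
      linarith
  calc d * T.trace = ∑ i, ∑ j, if i = j then d * T i i else 0 := by
        simp [trace, mul_sum]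
    _ ≤ ∑ i, ∑ j, (S i j * T j i + M * if i ≠ j then |T i j| else 0) :=
        sum_le_sum fun i _ => sum_le_sum fun j _ => entry_bound i j
    _ = (S * T).trace + M * offDiagL1Norm T := by
        simp only [offDiagL1Norm, trace, Matrix.diag, Matrix.mul_apply, mul_sum, sum_add_distrib]

lemma exists_pos_forall_mul_trace_le {S : Matrix m m ℝ} (hS : S.PosSemidef)
    (hdiag : ∀ i, 0 < S i i) {ρ : ℝ} (hρ : 0 < ρ) :
    ∃ c : ℝ, 0 < c ∧ ∀ T : Matrix m m ℝ, T.PosSemidef →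
      c * T.trace ≤ (S * T).trace + ρ * offDiagL1Norm T := by
  obtain ⟨d, hd, hd_pos⟩ : ∃ d : ℝ, (∀ i, d ≤ S i i) ∧ 0 < d :=
    ((eventually_all.mpr fun i => (eventually_le_nhds (hdiag i)).filter_mono
      nhdsWithin_le_nhds).and self_mem_nhdsWithin : ∀ᶠ d in 𝓝[>] (0 : ℝ), _).exists
  have hM : 0 ≤ S.trace := hS.trace_nonneg
  -- Only a fraction `t` of `(S * T).trace ≥ 0` is kept, small enough for the penalty to absorb the
  -- off-diagonal entries of `S`.
  set t := ρ / (ρ + S.trace) with ht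
  have t_pos : 0 < t := by positivity
  have t_le_one : t ≤ 1 := (div_le_one (by positivity)).mpr (by linarith)
  have t_mul_le : t * S.trace ≤ ρ := by
    rw [ht, div_mul_eq_mul_div, div_le_iff₀ (by positivity)]
    gcongr
    linarith
  refine ⟨t * d, mul_pos t_pos hd_pos, fun T hT => ?_⟩
  have penalty_nonneg := offDiagL1Norm_nonneg T
  calc t * d * T.trace = t * (d * T.trace) := mul_assoc _ _ _
    _ ≤ t * ((S * T).trace + S.trace * offDiagL1Norm T) := by
        gcongr
        exact mul_trace_le_trace_mul_add_offDiagL1Norm hd (abs_apply_le_trace_of_posSemidef hS) hT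
    _ = t * (S * T).trace + t * S.trace * offDiagL1Norm T := by ring
    _ ≤ (S * T).trace + ρ * offDiagL1Norm T := by
        gcongr
        exact mul_le_of_le_one_left (trace_mul_nonneg_of_posSemidef hS hT) t_le_one

lemma tendsto_graphicalLasso_cocompact_atTop {S : Matrix m m ℝ} (hS : S.PosSemidef)
    (hdiag : ∀ i, 0 < S i i) {ρ : ℝ} (hρ : 0 < ρ) :
    Tendsto (fun T : {T : Matrix m m ℝ // T.PosDef} => graphicalLasso S ρ T)
      (cocompact _) atTop := by
  obtain ⟨c, hc, trace_bound⟩ := exists_pos_forall_mul_trace_le hS hdiag hρ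
  refine tendsto_atTop_mono (fun T => ?_) (tendsto_mul_trace_sub_log_det_cocompact_atTop hc)
  unfold graphicalLasso
  linarith [trace_bound T T.2.posSemidef]

end GraphicalLasso

section GroupJGL

variable {p K : ℕ} {S : Fin K → Matrix (Fin p) (Fin p) ℝ} {n : Fin K → ℝ} {l1 l2 : ℝ}

lemma groupJGL_eq_sum_graphicalLasso (hn : ∀ k, n k ≠ 0) (Θ : Fin K → Matrix (Fin p) (Fin p) ℝ) :
    groupJGL n S l1 l2 Θ =
      ∑ k, n k * graphicalLasso (S k) (l1 / n k) (Θ k) + l2 * offDiagGroupNorm Θ := by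
  have distrib (k : Fin K) : n k * graphicalLasso (S k) (l1 / n k) (Θ k) =
      n k * (-Real.log (Θ k).det + (S k * Θ k).trace) + l1 * offDiagL1Norm (Θ k) := by
    rw [graphicalLasso, mul_add, ← mul_assoc, mul_div_cancel₀ _ (hn k)]
  simp only [distrib, sum_add_distrib, ← mul_sum]
  rfl

lemma strictConvexOn_groupJGL (hn : ∀ k, 0 < n k) (hl1 : 0 ≤ l1) (hl2 : 0 ≤ l2) :
    StrictConvexOn ℝ (Set.univ.pi fun _ => {T : Matrix (Fin p) (Fin p) ℝ | T.PosDef})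
      (groupJGL n S l1 l2) := by
  have classes := strictConvexOn_sum_apply fun k => strictConvexOn_smul (hn k)
    (strictConvexOn_graphicalLasso (S k) (div_nonneg hl1 (hn k).le))
  have penalty := (convexOn_offDiagGroupNorm.subset (Set.subset_univ _) classes.1).smul hl2
  rw [funext (groupJGL_eq_sum_graphicalLasso fun k => (hn k).ne')]
  exact classes.add_convexOn penalty

lemma continuous_groupJGL (hn : ∀ k, n k ≠ 0) :
    Continuous fun Θ : Fin K → {T : Matrix (Fin p) (Fin p) ℝ // T.PosDef} =>
      groupJGL n S l1 l2 fun k => Θ k := by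
  simp only [groupJGL_eq_sum_graphicalLasso hn]
  have classes := continuous_finsetSum univ fun k _ =>
    ((continuous_graphicalLasso (S k) (l1 / n k)).comp
      (continuous_apply (A := fun _ => {T : Matrix (Fin p) (Fin p) ℝ // T.PosDef}) k)).const_mul
        (n k)
  exact classes.add ((continuous_offDiagGroupNorm.comp (by fun_prop)).const_mul l2)

lemma tendsto_groupJGL_cocompact_atTop (hS : ∀ k, (S k).PosSemidef) (hdiag : ∀ k i, 0 < S k i i)
    (hn : ∀ k, 0 < n k) (hl1 : 0 < l1) (hl2 : 0 ≤ l2) :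
    Tendsto (fun Θ : Fin K → {T : Matrix (Fin p) (Fin p) ℝ // T.PosDef} =>
      groupJGL n S l1 l2 fun k => Θ k) (cocompact _) atTop := by
  have tendsto_class (k : Fin K) := (tendsto_graphicalLasso_cocompact_atTop (hS k) (hdiag k)
    (div_pos hl1 (hn k))).const_mul_atTop (hn k)
  have bddBelow_class (k : Fin K) := bddBelow_range_of_tendsto_cocompact_atTop
    ((continuous_graphicalLasso (S k) (l1 / n k)).const_mul (n k)) (tendsto_class k)
  refine tendsto_atTop_mono (fun Θ => ?_)
    (tendsto_sum_apply_cocompact_atTop bddBelow_class tendsto_class)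
  rw [groupJGL_eq_sum_graphicalLasso fun k => (hn k).ne']
  exact le_add_of_nonneg_right (mul_nonneg hl2 (offDiagGroupNorm_nonneg _))

end GroupJGL

/-- The group joint graphical lasso objective attains its infimum over `K`-tuples of
symmetric positive definite matrices, and the minimizer is unique. -/
theorem stmt1 {p K : ℕ} (hK : 2 ≤ K) (hp : 1 ≤ p)
    (S : Fin K → Matrix (Fin p) (Fin p) ℝ) (hS : ∀ k, (S k).PosSemidef)
    (hSd : ∀ k i, 0 < S k i i)
    (n : Fin K → ℝ) (hn : ∀ k, 0 < n k)
    (l1 l2 : ℝ) (hl1 : 0 < l1) (hl2 : 0 ≤ l2) :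
    ∃! Θ : Fin K → Matrix (Fin p) (Fin p) ℝ,
      (∀ k, (Θ k).PosDef) ∧
        ∀ Θ' : Fin K → Matrix (Fin p) (Fin p) ℝ, (∀ k, (Θ' k).PosDef) →
          groupJGL n S l1 l2 Θ ≤ groupJGL n S l1 l2 Θ' := by
  have : Nonempty {T : Matrix (Fin p) (Fin p) ℝ // T.PosDef} := ⟨⟨1, .one⟩⟩
  obtain ⟨Θ, hmin⟩ := (continuous_groupJGL fun k => (hn k).ne').exists_forall_le
    (tendsto_groupJGL_cocompact_atTop hS hSd hn hl1 hl2)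
  refine ⟨fun k => Θ k, ⟨fun k => (Θ k).2, fun Θ' hΘ' => hmin fun k => ⟨Θ' k, hΘ' k⟩⟩, ?_⟩
  rintro Θ' ⟨hΘ', hmin'⟩
  exact (strictConvexOn_groupJGL hn hl1.le hl2).eq_of_isMinOn
    (fun Θ'' hΘ'' => hmin' Θ'' fun k => hΘ'' k (Set.mem_univ k))
    (fun Θ'' hΘ'' => hmin fun k => ⟨Θ'' k, hΘ'' k (Set.mem_univ k)⟩)
    (fun k _ => hΘ' k) (fun k _ => (Θ k).2)
end

section
/- Assume K ≥ 2, p ≥ 1, that each S^(k) is symmetric positive semidefinite with strictly positive diagonal entries, that all sample sizes are equal, n_k = n > 0 for every k, and that λ₁ > 0 and λ₂ ≥ 0. Let Θ* be the minimizer of the fused joint graphical lasso objective F over K-tuples of symmetric positive definite p×p matrices, let Θ₀ be any K-tuple of symmetric positive definite p×p matrices, and set M := ‖Θ₀‖_F + 2‖Θ*‖_F and m := e^{−F(Θ₀)/n} · M^{1−Kp}, where ‖Θ‖_F denotes (Σ_{k=1}^K ‖Θ^(k)‖_F²)^{1/2}. Then every K-tuple Θ of symmetric positive definite p×p matrices satisfying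 F(Θ) ≤ F(Θ₀) and ‖Θ − Θ*‖_F ≤ ‖Θ₀ − Θ*‖_F has every eigenvalue of every block Θ^(k) contained in the interval [m, M]. -/
open Matrix Finset

/-- The fused joint graphical lasso objective on `K`-tuples of `p × p` matrices. -/
noncomputable def fusedJGL {p K : ℕ} (n : Fin K → ℝ) (S : Fin K → Matrix (Fin p) (Fin p) ℝ)
    (l1 l2 : ℝ) (Θ : Fin K → Matrix (Fin p) (Fin p) ℝ) : ℝ :=
  (∑ k, n k * (-Real.log (Θ k).det + (S k * Θ k).trace))
    + l1 * ∑ k, ∑ i, ∑ j, (if i ≠ j then |Θ k i j| else 0)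
    + l2 * ∑ k, ∑ l, (if k ≠ l then ∑ i, ∑ j, |Θ k i j - Θ l i j| else 0)

/-- The Frobenius norm of a `K`-tuple of `p × p` matrices:
`‖Θ‖_F = (Σ_k ‖Θ^(k)‖_F²)^(1/2)`. -/
noncomputable def frobT {p K : ℕ} (Θ : Fin K → Matrix (Fin p) (Fin p) ℝ) : ℝ :=
  Real.sqrt (∑ k, ∑ i, ∑ j, (Θ k i j) ^ 2)

/-
Since `Θ` is at least as close to `Θ*` as `Θ₀`, the triangle inequality gives `‖Θ‖_F ≤ M`, and the
Frobenius norm of the tuple bounds every eigenvalue `λ_kj` of every block. The penalties and the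
traces `tr (S^(k) Θ^(k))` are nonnegative, so a bound `c` on the objective gives
`Σ_{k,j} n_k log λ_kj ≥ -c`. Hence the gaps `n_k (log M - log λ_kj)`, which are nonnegative, have
total at most `c + p (Σ_k n_k) log M`; every single gap obeys this bound, which bounds `λ_kj`
from below.
-/

lemma norm_le_add_two_mul_norm_of_norm_sub_le {E : Type*} [SeminormedAddCommGroup E] {a b c : E}
    (h : ‖a - b‖ ≤ ‖c - b‖) : ‖a‖ ≤ ‖c‖ + 2 * ‖b‖ := by
  linarith [norm_le_norm_sub_add a b, norm_sub_le c b]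

lemma exp_mul_rpow_le_of_neg_le_sum_mul_log {ι : Type*} [Fintype ι] {w x : ι → ℝ} {c M : ℝ}
    (hw : ∀ i, 0 ≤ w i) (hx : ∀ i, 0 < x i) (hxM : ∀ i, x i ≤ M)
    (hc : -c ≤ ∑ i, w i * Real.log (x i)) {i : ι} (hi : 0 < w i) :
    Real.exp (-c / w i) * M ^ (1 - (∑ j, w j) / w i) ≤ x i := by
  have hM : 0 < M := (hx i).trans_le (hxM i)
  have gap_nonneg (j : ι) : 0 ≤ w j * (Real.log M - Real.log (x j)) :=
    mul_nonneg (hw j) (sub_nonneg.mpr (Real.log_le_log (hx j) (hxM j)))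
  have gap_le : w i * (Real.log M - Real.log (x i)) ≤ c + (∑ j, w j) * Real.log M :=
    calc w i * (Real.log M - Real.log (x i))
        ≤ ∑ j, w j * (Real.log M - Real.log (x j)) :=
          single_le_sum (fun j _ => gap_nonneg j) (mem_univ i)
      _ = (∑ j, w j) * Real.log M - ∑ j, w j * Real.log (x j) := by
          simp only [mul_sub, sum_sub_distrib, sum_mul]
      _ ≤ c + (∑ j, w j) * Real.log M := by linarith
  rw [Real.rpow_def_of_pos hM, ← Real.exp_add, ← Real.le_log_iff_exp_le (hx i)]
  calc -c / w i + Real.log M * (1 - (∑ j, w j) / w i)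
      = Real.log M - (c + (∑ j, w j) * Real.log M) / w i := by ring
    _ ≤ Real.log (x i) := by
        rw [sub_le_comm, le_div_iff₀' hi]
        exact gap_le

section EigenvalueBounds

variable {m 𝕜 : Type*} [Fintype m] [RCLike 𝕜]

open scoped ComplexOrder MatrixOrder Matrix.Norms.L2Operator in
lemma trace_mul_nonneg_of_posSemidef_s3 {A B : Matrix m m 𝕜} (hA : A.PosSemidef)
    (hB : B.PosSemidef) : 0 ≤ (A * B).trace := by
  classical
  obtain ⟨C, rfl⟩ := CStarAlgebra.nonneg_iff_eq_star_mul_self.mp hB.nonneg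
  rw [star_eq_conjTranspose, ← Matrix.mul_assoc, trace_mul_comm, ← Matrix.mul_assoc]
  exact (hA.mul_mul_conjTranspose_same C).trace_nonneg

variable [DecidableEq m]

open scoped Matrix.Norms.Frobenius in
lemma abs_eigenvalues_le_frobenius_norm {A : Matrix m m 𝕜} (hA : A.IsHermitian) (i : m) :
    |hA.eigenvalues i| ≤ ‖A‖ := by
  have norm_eigenvector : ‖replicateCol Unit (hA.eigenvectorBasis i).ofLp‖ = 1 := by
    rw [frobenius_norm_replicateCol]
    exact hA.eigenvectorBasis.norm_eq_one i
  calc |hA.eigenvalues i|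
      = ‖hA.eigenvalues i • replicateCol Unit (hA.eigenvectorBasis i).ofLp‖ := by
        rw [norm_smul, norm_eigenvector, mul_one, Real.norm_eq_abs]
    _ = ‖A * replicateCol Unit (hA.eigenvectorBasis i).ofLp‖ := by
        rw [← replicateCol_mulVec, hA.mulVec_eigenvectorBasis, replicateCol_smul]
    _ ≤ ‖A‖ := by
        simpa only [norm_eigenvector, mul_one] using
          frobenius_norm_mul A (replicateCol Unit (hA.eigenvectorBasis i).ofLp)

lemma log_det_eq_sum_log_eigenvalues {A : Matrix m m ℝ} (hA : A.PosDef) :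
    Real.log A.det = ∑ i, Real.log (hA.1.eigenvalues i) := by
  rw [hA.1.det_eq_prod_eigenvalues]
  exact Real.log_prod fun i _ => (hA.eigenvalues_pos i).ne'

end EigenvalueBounds

section Tuple

variable {p K : ℕ} {Θ : Fin K → Matrix (Fin p) (Fin p) ℝ}

open scoped Matrix.Norms.Frobenius in
lemma frobT_eq_norm_toLp (Θ : Fin K → Matrix (Fin p) (Fin p) ℝ) :
    frobT Θ = ‖WithLp.toLp 2 Θ‖ := by
  have norm_sq_block (k : Fin K) : ‖Θ k‖ ^ 2 = ∑ i, ∑ j, Θ k i j ^ 2 := by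
    rw [frobenius_norm_def, ← Real.sqrt_eq_rpow, Real.sq_sqrt (by positivity)]
    simp only [Real.rpow_two, Real.norm_eq_abs, sq_abs]
  simp only [frobT, PiLp.norm_eq_of_L2, norm_sq_block]

open scoped Matrix.Norms.Frobenius in
lemma frobT_le_of_frobT_sub_le {Θ₀ Θ₁ : Fin K → Matrix (Fin p) (Fin p) ℝ}
    (h : frobT (fun k => Θ k - Θ₁ k) ≤ frobT (fun k => Θ₀ k - Θ₁ k)) :
    frobT Θ ≤ frobT Θ₀ + 2 * frobT Θ₁ := by
  simp only [frobT_eq_norm_toLp] at h ⊢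
  exact norm_le_add_two_mul_norm_of_norm_sub_le
    (a := WithLp.toLp 2 Θ) (b := WithLp.toLp 2 Θ₁) (c := WithLp.toLp 2 Θ₀) h

open scoped Matrix.Norms.Frobenius in
lemma eigenvalues_le_frobT {k : Fin K} (hΘ : (Θ k).IsHermitian) (i : Fin p) :
    hΘ.eigenvalues i ≤ frobT Θ := by
  rw [frobT_eq_norm_toLp]
  exact (le_abs_self _).trans <| (abs_eigenvalues_le_frobenius_norm hΘ i).trans <|
    PiLp.norm_apply_le (WithLp.toLp 2 Θ) k

variable {n : Fin K → ℝ} {S : Fin K → Matrix (Fin p) (Fin p) ℝ} {l1 l2 : ℝ}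

lemma neg_sum_mul_log_det_le_fusedJGL (hS : ∀ k, (S k).PosSemidef) (hn : ∀ k, 0 ≤ n k)
    (hl1 : 0 ≤ l1) (hl2 : 0 ≤ l2) (hΘ : ∀ k, (Θ k).PosSemidef) :
    -∑ k, n k * Real.log (Θ k).det ≤ fusedJGL n S l1 l2 Θ := by
  have likelihood_ge : -∑ k, n k * Real.log (Θ k).det
      ≤ ∑ k, n k * (-Real.log (Θ k).det + (S k * Θ k).trace) := by
    rw [← sum_neg_distrib]
    refine sum_le_sum fun k _ => ?_
    linarith [mul_nonneg (hn k) (trace_mul_nonneg_of_posSemidef_s3 (hS k) (hΘ k))]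
  have sparsity_nonneg : 0 ≤ l1 * ∑ k, ∑ i, ∑ j, (if i ≠ j then |Θ k i j| else 0) := by
    positivity
  have fusion_nonneg :
      0 ≤ l2 * ∑ k, ∑ l, (if k ≠ l then ∑ i, ∑ j, |Θ k i j - Θ l i j| else 0) := by
    positivity
  unfold fusedJGL
  linarith

lemma sum_mul_log_det_eq_sum_mul_log_eigenvalues (n : Fin K → ℝ) (hΘ : ∀ k, (Θ k).PosDef) :
    ∑ k, n k * Real.log (Θ k).det
      = ∑ x : Fin K × Fin p, n x.1 * Real.log ((hΘ x.1).1.eigenvalues x.2) := by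
  simp only [log_det_eq_sum_log_eigenvalues (hΘ _), mul_sum, Fintype.sum_prod_type]

theorem stmt3_general (hS : ∀ k, (S k).PosSemidef) (hn : ∀ k, 0 < n k) (hl1 : 0 ≤ l1)
    (hl2 : 0 ≤ l2) (hΘ : ∀ k, (Θ k).PosDef) {c M : ℝ} (hF : fusedJGL n S l1 l2 Θ ≤ c)
    (hM : frobT Θ ≤ M) (k : Fin K) (i : Fin p) :
    Real.exp (-c / n k) * M ^ (1 - (∑ l, n l) / n k * p) ≤ (hΘ k).1.eigenvalues i ∧
      (hΘ k).1.eigenvalues i ≤ M := by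
  have eigenvalues_le (x : Fin K × Fin p) : (hΘ x.1).1.eigenvalues x.2 ≤ M :=
    (eigenvalues_le_frobT _ _).trans hM
  have sum_log_ge :
      -c ≤ ∑ x : Fin K × Fin p, n x.1 * Real.log ((hΘ x.1).1.eigenvalues x.2) := by
    rw [← sum_mul_log_det_eq_sum_mul_log_eigenvalues n hΘ, neg_le]
    exact (neg_sum_mul_log_det_le_fusedJGL hS (fun k => (hn k).le) hl1 hl2
      fun k => (hΘ k).posSemidef).trans hF
  have sum_weights : ∑ x : Fin K × Fin p, n x.1 = (∑ l, n l) * p := by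
    simp [Fintype.sum_prod_type, sum_mul, mul_comm]
  refine ⟨?_, eigenvalues_le (k, i)⟩
  simpa only [sum_weights, div_mul_eq_mul_div] using
    exp_mul_rpow_le_of_neg_le_sum_mul_log (fun x => (hn x.1).le)
      (fun x => (hΘ x.1).eigenvalues_pos x.2) eigenvalues_le sum_log_ge (i := (k, i)) (hn k)

end Tuple

/-- Eigenvalue bounds on the level set of the fused joint graphical lasso objective
(equal sample sizes `n_k = n`). -/
theorem stmt3 {p K : ℕ} (hK : 2 ≤ K) (hp : 1 ≤ p)
    (S : Fin K → Matrix (Fin p) (Fin p) ℝ) (hS : ∀ k, (S k).PosSemidef)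
    (hSd : ∀ k i, 0 < S k i i)
    (n : ℝ) (hn : 0 < n)
    (l1 l2 : ℝ) (hl1 : 0 < l1) (hl2 : 0 ≤ l2)
    (Θs : Fin K → Matrix (Fin p) (Fin p) ℝ) (hΘs : ∀ k, (Θs k).PosDef)
    (hmin : ∀ Θ' : Fin K → Matrix (Fin p) (Fin p) ℝ, (∀ k, (Θ' k).PosDef) →
      fusedJGL (fun _ => n) S l1 l2 Θs ≤ fusedJGL (fun _ => n) S l1 l2 Θ')
    (Θ0 : Fin K → Matrix (Fin p) (Fin p) ℝ) (hΘ0 : ∀ k, (Θ0 k).PosDef)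
    (M m : ℝ) (hM : M = frobT Θ0 + 2 * frobT Θs)
    (hm : m = Real.exp (-(fusedJGL (fun _ => n) S l1 l2 Θ0) / n) * M ^ (1 - (K * p : ℤ))) :
    ∀ Θ : Fin K → Matrix (Fin p) (Fin p) ℝ, ∀ hΘ : ∀ k, (Θ k).PosDef,
      fusedJGL (fun _ => n) S l1 l2 Θ ≤ fusedJGL (fun _ => n) S l1 l2 Θ0 →
      frobT (fun k => Θ k - Θs k) ≤ frobT (fun k => Θ0 k - Θs k) →
      ∀ k i, m ≤ (hΘ k).1.eigenvalues i ∧ (hΘ k).1.eigenvalues i ≤ M := by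
  intro Θ hΘ hF hd k i
  rw [hm, ← Real.rpow_intCast]
  simpa [hn.ne'] using stmt3_general hS (fun _ => hn) hl1.le hl2 hΘ hF
    ((frobT_le_of_frobT_sub_le hd).trans_eq hM.symm) k i
end

section
/- Let S ∈ ℝ^{p×p} be symmetric positive semidefinite, λ > 0, and let Θ* be a symmetric positive definite minimizer of the graphical lasso objective F over symmetric positive definite p×p matrices. Let Θ be symmetric positive definite, let η > 0, and define the update Θ' entrywise by Θ'_{ij} = S_{ηλ}((Θ − η(S − Θ^{−1}))_{ij}) for i ≠ j and Θ'_{ii} = (Θ − η(S − Θ^{−1}))_{ii}, where S_{ηλ} is the soft-thresholding operator. Set a := min(λ_min(Θ*), λ_min(Θ)), b := max(λ_max(Θ*), λ_max(Θ)), and γ := max(|1 − η/b²|, |1 − η/a²|), with λ_min and λ_max the smallest and largest eigenvalues. Then ‖Θ' − Θ*‖_F ≤ γ ‖Θ − Θ*‖_F. -/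
open Matrix Finset

/-- The graphical lasso objective `F(Θ) = -log det Θ + trace(SΘ) + λ Σ_{i≠j} |θ_ij|`. -/
noncomputable def glObj {p : ℕ} (S : Matrix (Fin p) (Fin p) ℝ) (l : ℝ)
    (Θ : Matrix (Fin p) (Fin p) ℝ) : ℝ :=
  -Real.log Θ.det + (S * Θ).trace + l * ∑ i, ∑ j, (if i ≠ j then |Θ i j| else 0)

/-- The soft-thresholding operator with threshold `t`. -/
noncomputable def softTh (t z : ℝ) : ℝ := Real.sign z * max (|z| - t) 0

/-- The Frobenius norm of a real matrix. -/
noncomputable def frob {p : ℕ} (A : Matrix (Fin p) (Fin p) ℝ) : ℝ :=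
  Real.sqrt (∑ i, ∑ j, (A i j) ^ 2)

/-!
The update is a gradient step `A ↦ A - η (S - A⁻¹)` on the smooth part of the objective followed by
the proximal operator of `η λ Σ_{i≠j} |θ_ij|`, which is entrywise soft-thresholding and hence
nonexpansive in the Frobenius norm. The minimizer `M` is a fixed point: if `N` is its update, the
first-order optimality condition of `M` tested at `N` and the subgradient inequality of the
proximal operator tested at `M` add up to `‖M - N‖² ≤ 0`.

It remains to compare two gradient steps, whose difference is `A K B - η K` with
`K = A⁻¹ (A - B) B⁻¹` and `A K B = A - B`. In eigenbases of `A` and `B`, passing from `A K B` to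
`A K B - η K` multiplies the `(i, j)` entry by `1 - η / (αᵢ βⱼ)`. All the products `αᵢ βⱼ` lie in
`[a², b²]`, so these factors are at most `γ` in absolute value.
-/

section Frobenius

open scoped Matrix.Norms.Frobenius

variable {m n α β 𝕜 : Type*} [Fintype m] [Fintype n]
  [SeminormedAddCommGroup α] [SeminormedAddCommGroup β] [RCLike 𝕜]

lemma frobenius_norm_sq (A : Matrix m n α) : ‖A‖ ^ 2 = ∑ i, ∑ j, ‖A i j‖ ^ 2 := by
  rw [frobenius_norm_def, ← Real.sqrt_eq_rpow, Real.sq_sqrt (by positivity)]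
  simp only [Real.rpow_two]

lemma frob_eq_norm {p : ℕ} (A : Matrix (Fin p) (Fin p) ℝ) : frob A = ‖A‖ := by
  rw [frob, ← Real.sqrt_sq (norm_nonneg A), frobenius_norm_sq]
  simp only [Real.norm_eq_abs, sq_abs]

lemma frobenius_norm_le_mul_of_forall_norm_le {A : Matrix m n α} {B : Matrix m n β} {c : ℝ}
    (hc : 0 ≤ c) (h : ∀ i j, ‖A i j‖ ≤ c * ‖B i j‖) : ‖A‖ ≤ c * ‖B‖ := by
  refine le_of_sq_le_sq ?_ (by positivity)
  rw [mul_pow, frobenius_norm_sq, frobenius_norm_sq, mul_sum]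
  refine sum_le_sum fun i _ ↦ ?_
  rw [mul_sum]
  refine sum_le_sum fun j _ ↦ ?_
  rw [← mul_pow]
  exact pow_le_pow_left₀ (norm_nonneg _) (h i j) 2

lemma ofReal_frobenius_norm_sq (A : Matrix m n 𝕜) : ((‖A‖ ^ 2 : ℝ) : 𝕜) = (Aᴴ * A).trace := by
  rw [frobenius_norm_sq, sum_comm]
  simp only [trace, diag_apply, mul_apply, conjTranspose_apply, RCLike.star_def, RCLike.conj_mul]
  push_cast
  rfl

lemma frobenius_norm_unitary_mul [DecidableEq m] {U : Matrix m m 𝕜} (hU : U ∈ unitaryGroup m 𝕜)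
    (A : Matrix m n 𝕜) : ‖U * A‖ = ‖A‖ := by
  refine (sq_eq_sq₀ (norm_nonneg _) (norm_nonneg _)).1 (RCLike.ofReal_injective (K := 𝕜) ?_)
  rw [ofReal_frobenius_norm_sq, ofReal_frobenius_norm_sq, conjTranspose_mul, Matrix.mul_assoc,
    ← Matrix.mul_assoc _ U, ← star_eq_conjTranspose U, mem_unitaryGroup_iff'.1 hU, Matrix.one_mul]

lemma frobenius_norm_mul_unitary [DecidableEq n] (A : Matrix m n 𝕜) {U : Matrix n n 𝕜}
    (hU : U ∈ unitaryGroup n 𝕜) : ‖A * U‖ = ‖A‖ := by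
  rw [← frobenius_norm_conjTranspose, conjTranspose_mul, ← star_eq_conjTranspose U,
    frobenius_norm_unitary_mul (Unitary.star_mem hU), frobenius_norm_conjTranspose]

lemma exists_unitary_mul_diagonal_mul_star [DecidableEq n] {A : Matrix n n 𝕜}
    (hA : A.IsHermitian) :
    ∃ U ∈ unitaryGroup n 𝕜, A = U * diagonal (fun i ↦ (hA.eigenvalues i : 𝕜)) * star U :=
  ⟨hA.eigenvectorUnitary, hA.eigenvectorUnitary.2,
    hA.spectral_theorem.trans (Unitary.conjStarAlgAut_apply _ _)⟩

lemma frobenius_norm_mul_mul_sub_smul_le [DecidableEq m] [DecidableEq n]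
    {A : Matrix m m 𝕜} {B : Matrix n n 𝕜} (hA : A.IsHermitian) (hB : B.IsHermitian)
    (K : Matrix m n 𝕜) {η c : ℝ} (hc : 0 ≤ c)
    (h : ∀ i j, |hA.eigenvalues i * hB.eigenvalues j - η| ≤
      c * |hA.eigenvalues i * hB.eigenvalues j|) :
    ‖A * K * B - η • K‖ ≤ c * ‖A * K * B‖ := by
  obtain ⟨U, hU, hAU⟩ := exists_unitary_mul_diagonal_mul_star hA
  obtain ⟨V, hV, hBV⟩ := exists_unitary_mul_diagonal_mul_star hB
  set D : Matrix m m 𝕜 := diagonal fun i ↦ (hA.eigenvalues i : 𝕜)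
  set E : Matrix n n 𝕜 := diagonal fun j ↦ (hB.eigenvalues j : 𝕜)
  set L : Matrix m n 𝕜 := star U * K * V with hL
  have hK : K = U * L * star V := by
    rw [hL, Matrix.mul_assoc, Matrix.mul_assoc, mem_unitaryGroup_iff.1 hV, Matrix.mul_one,
      ← Matrix.mul_assoc, mem_unitaryGroup_iff.1 hU, Matrix.one_mul]
  have hAKB : A * K * B = U * (D * L * E) * star V := by
    conv_lhs => rw [hAU, hBV]
    simp only [hL, Matrix.mul_assoc]
  have hsub : A * K * B - η • K = U * (D * L * E - η • L) * star V := by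
    rw [hAKB, Matrix.mul_sub, Matrix.sub_mul, Matrix.mul_smul, Matrix.smul_mul, ← hK]
  rw [hsub, hAKB, frobenius_norm_mul_unitary _ (Unitary.star_mem hV),
    frobenius_norm_unitary_mul hU, frobenius_norm_mul_unitary _ (Unitary.star_mem hV),
    frobenius_norm_unitary_mul hU]
  refine frobenius_norm_le_mul_of_forall_norm_le hc fun i j ↦ ?_
  have hDLE : (D * L * E) i j = (hA.eigenvalues i * hB.eigenvalues j : ℝ) * L i j := by
    rw [mul_diagonal, diagonal_mul]
    push_cast
    ring
  have hentry : (D * L * E - η • L) i j =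
      (hA.eigenvalues i * hB.eigenvalues j - η : ℝ) * L i j := by
    rw [Matrix.sub_apply, hDLE, Matrix.smul_apply, RCLike.real_smul_eq_coe_mul, ← sub_mul,
      ← RCLike.ofReal_sub]
  rw [hentry, hDLE, norm_mul, norm_mul, RCLike.norm_ofReal, RCLike.norm_ofReal, ← mul_assoc]
  exact mul_le_mul_of_nonneg_right (h i j) (norm_nonneg _)

lemma abs_one_sub_div_le_max {s t r η : ℝ} (hs : 0 < s) (hst : s ≤ t) (htr : t ≤ r)
    (hη : 0 ≤ η) : |1 - η / t| ≤ max |1 - η / r| |1 - η / s| := by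
  rw [max_comm]
  exact abs_le_max_abs_abs (by gcongr) (by have := hs.trans_le hst; gcongr)

open scoped ComplexOrder in
lemma frobenius_norm_add_smul_inv_sub_le [DecidableEq n] {A B : Matrix n n 𝕜} (hA : A.PosDef)
    (hB : B.PosDef) {η a b : ℝ} (hη : 0 ≤ η) (ha : 0 < a)
    (hAab : ∀ i, hA.1.eigenvalues i ∈ Set.Icc a b) (hBab : ∀ i, hB.1.eigenvalues i ∈ Set.Icc a b) :
    ‖(A + η • A⁻¹) - (B + η • B⁻¹)‖ ≤ max |1 - η / b ^ 2| |1 - η / a ^ 2| * ‖A - B‖ := by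
  set K := A⁻¹ * (A - B) * B⁻¹ with hK
  have hAKB : A * K * B = A - B := by
    rw [hK, ← Matrix.mul_assoc, ← Matrix.mul_assoc,
      mul_nonsing_inv _ ((isUnit_iff_isUnit_det A).1 hA.isUnit), Matrix.one_mul, Matrix.mul_assoc,
      nonsing_inv_mul _ ((isUnit_iff_isUnit_det B).1 hB.isUnit), Matrix.mul_one]
  have hinv : A⁻¹ - B⁻¹ = -K := by
    rw [inv_sub_inv (iff_of_true hA.isUnit hB.isUnit), hK, ← neg_sub A B, Matrix.mul_neg,
      Matrix.neg_mul]
  have hstep : (A + η • A⁻¹) - (B + η • B⁻¹) = A * K * B - η • K := by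
    rw [add_sub_add_comm, ← smul_sub, hinv, hAKB, smul_neg, ← sub_eq_add_neg]
  rw [hstep, ← hAKB]
  refine frobenius_norm_mul_mul_sub_smul_le hA.1 hB.1 K
    (le_max_of_le_left (abs_nonneg _)) fun i j ↦ ?_
  obtain ⟨hAa, hAb⟩ := hAab i
  obtain ⟨hBa, hBb⟩ := hBab j
  set t := hA.1.eigenvalues i * hB.1.eigenvalues j
  have hat : a ^ 2 ≤ t := by rw [sq]; exact mul_le_mul hAa hBa ha.le (ha.le.trans hAa)
  have htb : t ≤ b ^ 2 := by
    rw [sq]; exact mul_le_mul hAb hBb (ha.le.trans hBa) (ha.le.trans (hAa.trans hAb))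
  have ht : 0 < t := (pow_pos ha 2).trans_le hat
  calc |t - η| = |1 - η / t| * |t| := by
        rw [← abs_mul, sub_mul, one_mul, div_mul_cancel₀ _ ht.ne']
    _ ≤ _ := by gcongr; exact abs_one_sub_div_le_max (pow_pos ha 2) hat htb hη

end Frobenius

section SoftThresholding

lemma softTh_of_lt {t z : ℝ} (ht : 0 ≤ t) (h : t < z) : softTh t z = z - t := by
  have hz : 0 < z := ht.trans_lt h
  rw [softTh, Real.sign_of_pos hz, abs_of_pos hz, max_eq_left (sub_nonneg.2 h.le), one_mul]

lemma softTh_of_abs_le {t z : ℝ} (h : |z| ≤ t) : softTh t z = 0 := by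
  rw [softTh, max_eq_right (sub_nonpos.2 h), mul_zero]

lemma softTh_neg (t z : ℝ) : softTh t (-z) = -softTh t z := by
  rw [softTh, softTh, abs_neg, Real.sign_neg, neg_mul]

lemma abs_sub_softTh_le {t : ℝ} (ht : 0 ≤ t) (z : ℝ) : |z - softTh t z| ≤ t := by
  rcases le_or_gt |z| t with hz | hz
  · rwa [softTh_of_abs_le hz, sub_zero]
  rcases lt_abs.1 hz with hz | hz
  · rw [softTh_of_lt ht hz, sub_sub_cancel, abs_of_nonneg ht]
  · rw [← neg_neg z, softTh_neg, softTh_of_lt ht hz, ← neg_sub', abs_neg, sub_sub_cancel,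
      abs_of_nonneg ht]

lemma sub_softTh_mul_softTh {t : ℝ} (ht : 0 ≤ t) (z : ℝ) :
    (z - softTh t z) * softTh t z = t * |softTh t z| := by
  rcases le_or_gt |z| t with hz | hz
  · simp only [softTh_of_abs_le hz, mul_zero, abs_zero]
  rcases lt_abs.1 hz with hz | hz
  · rw [softTh_of_lt ht hz, abs_of_pos (sub_pos.2 hz)]
    ring
  · rw [← neg_neg z, softTh_neg, softTh_of_lt ht hz, abs_neg, abs_of_pos (sub_pos.2 hz)]
    ring

-- `z - softTh t z` is a subgradient of `t * |·|` at `softTh t z`.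
lemma sub_softTh_mul_sub_softTh_le {t : ℝ} (ht : 0 ≤ t) (z w : ℝ) :
    (z - softTh t z) * (w - softTh t z) ≤ t * (|w| - |softTh t z|) := by
  have hw : (z - softTh t z) * w ≤ t * |w| := by
    grw [← abs_sub_softTh_le ht z, ← abs_mul, ← le_abs_self]
  rw [mul_sub, mul_sub, sub_softTh_mul_softTh ht]
  exact sub_le_sub_right hw _

lemma abs_softTh_sub_softTh_le {t : ℝ} (ht : 0 ≤ t) (z w : ℝ) :
    |softTh t z - softTh t w| ≤ |z - w| := by
  have hz := sub_softTh_mul_sub_softTh_le ht z (softTh t w)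
  have hw := sub_softTh_mul_sub_softTh_le ht w (softTh t z)
  set d := softTh t z - softTh t w with hd
  have hfirm : d * d ≤ (z - w) * d := by rw [hd]; linarith
  have hsq : d ^ 2 ≤ (z - w) ^ 2 := by nlinarith only [hfirm, sq_nonneg (z - w - d)]
  exact sq_le_sq.1 hsq

variable {n : Type*} [DecidableEq n]

/-- Soft-thresholding of the off-diagonal entries of a matrix: the proximal operator of `t` times
the off-diagonal `ℓ¹` seminorm. -/
noncomputable def softThOffDiag (t : ℝ) (A : Matrix n n ℝ) : Matrix n n ℝ :=
  .of fun i j ↦ if i = j then A i j else softTh t (A i j)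

/-- The off-diagonal `ℓ¹` seminorm `Σ_{i≠j} |a_ij|`, the penalty of the graphical lasso. -/
def offDiagL1 [Fintype n] (A : Matrix n n ℝ) : ℝ :=
  ∑ i, ∑ j, if i ≠ j then |A i j| else 0

lemma isHermitian_softThOffDiag (t : ℝ) {A : Matrix n n ℝ} (hA : A.IsHermitian) :
    (softThOffDiag t A).IsHermitian := by
  ext i j
  have hij : A j i = A i j := hA.apply i j
  simp only [softThOffDiag, conjTranspose_apply, of_apply, hij, eq_comm, star_trivial]

variable [Fintype n]

open scoped Matrix.Norms.Frobenius in
lemma norm_softThOffDiag_sub_le {t : ℝ} (ht : 0 ≤ t) (A B : Matrix n n ℝ) :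
    ‖softThOffDiag t A - softThOffDiag t B‖ ≤ ‖A - B‖ := by
  rw [← one_mul ‖A - B‖]
  refine frobenius_norm_le_mul_of_forall_norm_le zero_le_one fun i j ↦ ?_
  rw [one_mul]
  by_cases hij : i = j
  · simp only [softThOffDiag, Matrix.sub_apply, of_apply, if_pos hij, le_refl]
  · simpa only [softThOffDiag, Matrix.sub_apply, of_apply, if_neg hij, Real.norm_eq_abs] using
      abs_softTh_sub_softTh_le ht (A i j) (B i j)

lemma trace_sub_softThOffDiag_mul_le {t : ℝ} (ht : 0 ≤ t) (A B : Matrix n n ℝ) :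
    ((A - softThOffDiag t A) * (B - softThOffDiag t A)ᵀ).trace ≤
      t * (offDiagL1 B - offDiagL1 (softThOffDiag t A)) := by
  simp only [← sum_hadamard_eq, offDiagL1, ← sum_sub_distrib, mul_sum]
  refine sum_le_sum fun i _ ↦ sum_le_sum fun j _ ↦ ?_
  by_cases hij : i = j
  · simp [softThOffDiag, hij]
  · simpa [softThOffDiag, hij] using sub_softTh_mul_sub_softTh_le ht (A i j) (B i j)

lemma convexOn_offDiagL1 : ConvexOn ℝ Set.univ (offDiagL1 (n := n)) := by
  refine ⟨convex_univ, fun A _ B _ s t hs ht _ ↦ ?_⟩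
  simp only [offDiagL1, smul_eq_mul, mul_sum, ← sum_add_distrib]
  refine sum_le_sum fun i _ ↦ sum_le_sum fun j _ ↦ ?_
  split_ifs
  · simpa [abs_mul, abs_of_nonneg hs, abs_of_nonneg ht] using abs_add_le (s * A i j) (t * B i j)
  · simp

end SoftThresholding

section Optimality

open Filter Topology

lemma sub_le_of_hasLineDerivAt_of_eventually_le {E : Type*} [AddCommGroup E] [Module ℝ E]
    {f g : E → ℝ} {f' : ℝ} {s : Set E} {x y : E} (hf : HasLineDerivAt ℝ f f' x (y - x))
    (hg : ConvexOn ℝ s g) (hx : x ∈ s) (hy : y ∈ s)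
    (hmin : ∀ᶠ t in 𝓝[>] (0 : ℝ),
      f x + g x ≤ f (x + t • (y - x)) + g (x + t • (y - x))) :
    g x - g y ≤ f' := by
  refine ge_of_tendsto hf.tendsto_slope_zero_right ?_
  filter_upwards [hmin, Ioo_mem_nhdsGT one_pos] with t ht ⟨ht0, ht1⟩
  have hconv : g (x + t • (y - x)) ≤ (1 - t) * g x + t * g y := by
    have h := hg.2 hx hy (sub_nonneg.2 ht1.le) ht0.le (sub_add_cancel 1 t)
    rwa [show (1 - t) • x + t • y = x + t • (y - x) by module] at h
  rw [smul_eq_mul, inv_mul_eq_div, le_div_iff₀ ht0]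
  linarith

section PosDefOpen

open scoped ComplexOrder

variable {n 𝕜 : Type*} [RCLike 𝕜] {M D : Matrix n n 𝕜}

lemma eventually_posDef_one_add_smul [Finite n] [DecidableEq n] (hD : D.IsHermitian) :
    ∀ᶠ t in 𝓝 (0 : ℝ), (1 + t • D).PosDef := by
  have := Fintype.ofFinite n
  obtain ⟨U, hU, hDU⟩ := exists_unitary_mul_diagonal_mul_star hD
  have hdiag (t : ℝ) :
      1 + t • D = U * diagonal (fun i ↦ ((1 + t * hD.eigenvalues i : ℝ) : 𝕜)) * star U := by
    have hadd : diagonal (fun i ↦ ((1 + t * hD.eigenvalues i : ℝ) : 𝕜)) =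
        1 + t • diagonal fun i ↦ (hD.eigenvalues i : 𝕜) := by
      rw [← diagonal_one, ← diagonal_smul, diagonal_add]
      simp [RCLike.real_smul_eq_coe_mul]
    rw [hadd, Matrix.mul_add, Matrix.add_mul, Matrix.mul_one, mem_unitaryGroup_iff.1 hU,
      Matrix.mul_smul, Matrix.smul_mul, ← hDU]
  have hpos : ∀ᶠ t in 𝓝 (0 : ℝ), ∀ i, 0 < 1 + t * hD.eigenvalues i :=
    eventually_all.2 fun i ↦
      (Continuous.tendsto' (by fun_prop) 0 1 (by simp)).eventually (lt_mem_nhds one_pos)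
  filter_upwards [hpos] with t ht
  rw [hdiag, (Unitary.isUnit_coe (U := ⟨U, hU⟩)).posDef_star_right_conjugate_iff,
    posDef_diagonal_iff]
  exact fun i ↦ RCLike.ofReal_pos.2 (ht i)

open scoped MatrixOrder in
lemma exists_isUnit_eq_star_mul_self [Fintype n] [DecidableEq n] (hM : M.PosDef) :
    ∃ B, IsUnit B ∧ M = star B * B := by
  obtain ⟨B, hB⟩ := CStarAlgebra.nonneg_iff_eq_star_mul_self.1 hM.posSemidef.nonneg
  have hdet : IsUnit (star B * B).det := (isUnit_iff_isUnit_det _).1 (hB ▸ hM.isUnit)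
  rw [det_mul] at hdet
  exact ⟨B, (isUnit_iff_isUnit_det B).2 (isUnit_of_mul_isUnit_right hdet), hB⟩

-- Writing `M = B* B` reduces to `M = 1` with `D` replaced by the congruent `B⁻* D B⁻¹`.
lemma eventually_posDef_add_smul [Finite n] (hM : M.PosDef) (hD : D.IsHermitian) :
    ∀ᶠ t in 𝓝 (0 : ℝ), (M + t • D).PosDef := by
  classical
  have := Fintype.ofFinite n
  obtain ⟨B, hB, rfl⟩ := exists_isUnit_eq_star_mul_self hM
  have hinv : B⁻¹ * B = 1 := nonsing_inv_mul _ ((isUnit_iff_isUnit_det B).1 hB)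
  have hinv' : star B * star B⁻¹ = 1 := by rw [← star_mul, hinv, star_one]
  have hcongr (t : ℝ) :
      star B * B + t • D = star B * (1 + t • (star B⁻¹ * D * B⁻¹)) * B := by
    have hD' : star B * (star B⁻¹ * D * B⁻¹) * B = D := by
      rw [← Matrix.mul_assoc, ← Matrix.mul_assoc, hinv', Matrix.one_mul, Matrix.mul_assoc, hinv,
        Matrix.mul_one]
    rw [Matrix.mul_add, Matrix.add_mul, Matrix.mul_one, Matrix.mul_smul, Matrix.smul_mul, hD']
  simp only [hcongr, hB.posDef_star_left_conjugate_iff]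
  exact eventually_posDef_one_add_smul (isHermitian_conjTranspose_mul_mul _ hD)

end PosDefOpen

variable {n : Type*} [Fintype n] [DecidableEq n]

lemma hasLineDerivAt_det_one (D : Matrix n n ℝ) : HasLineDerivAt ℝ det D.trace 1 D := by
  set q := (det (1 + (Polynomial.X : Polynomial ℝ) • D.map Polynomial.C)).divX.divX
  have hlin : HasDerivAt (fun t : ℝ ↦ 1 + D.trace * t) (D.trace * 1) 0 :=
    ((hasDerivAt_id 0).const_mul D.trace).const_add 1
  have hrem := (q.hasDerivAt 0).mul (hasDerivAt_pow 2 (0 : ℝ))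
  rw [HasLineDerivAt, funext fun t : ℝ ↦ det_one_add_smul t D]
  exact (hlin.add hrem).congr_deriv (by simp)

lemma hasLineDerivAt_log_det {M : Matrix n n ℝ} (hM : M.det ≠ 0) (D : Matrix n n ℝ) :
    HasLineDerivAt ℝ (fun A ↦ Real.log A.det) (M⁻¹ * D).trace M D := by
  have hfactor (t : ℝ) : (M + t • D).det = M.det * (1 + t • (M⁻¹ * D)).det := by
    rw [← det_mul, Matrix.mul_add, Matrix.mul_smul, mul_nonsing_inv_cancel_left _ _ hM.isUnit,
      Matrix.mul_one]
  have hdet : HasDerivAt (fun t : ℝ ↦ (M + t • D).det) (M.det * (M⁻¹ * D).trace) 0 := by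
    simp only [hfactor]
    exact (hasLineDerivAt_det_one (M⁻¹ * D)).const_mul M.det
  have h := hdet.log (by simpa using hM)
  simpa [HasLineDerivAt, hM] using h

/-- The smooth part `-log det Θ + trace(SΘ)` of the graphical lasso objective. -/
noncomputable def gaussianNegLogLikelihood (S Θ : Matrix n n ℝ) : ℝ :=
  -Real.log Θ.det + (S * Θ).trace

lemma hasLineDerivAt_gaussianNegLogLikelihood (S : Matrix n n ℝ) {M : Matrix n n ℝ}
    (hM : M.det ≠ 0) (D : Matrix n n ℝ) :
    HasLineDerivAt ℝ (gaussianNegLogLikelihood S) ((S - M⁻¹) * D).trace M D := by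
  have htrace : HasDerivAt (fun t : ℝ ↦ (S * (M + t • D)).trace) (S * D).trace 0 := by
    have h := ((hasDerivAt_id (0 : ℝ)).mul_const (S * D).trace).const_add (S * M).trace
    simpa [Matrix.mul_add] using h
  refine (HasDerivAt.add (hasLineDerivAt_log_det hM D).neg htrace).congr_deriv ?_
  rw [neg_add_eq_sub, ← trace_sub, ← Matrix.sub_mul]

lemma glObj_eq {p : ℕ} (S : Matrix (Fin p) (Fin p) ℝ) (l : ℝ) (Θ : Matrix (Fin p) (Fin p) ℝ) :
    glObj S l Θ = gaussianNegLogLikelihood S Θ + l * offDiagL1 Θ :=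
  rfl

variable {p : ℕ} {S M : Matrix (Fin p) (Fin p) ℝ} {l : ℝ}

lemma mul_offDiagL1_sub_le_trace_of_isLocalMinOn (hl : 0 ≤ l) (hM : M.PosDef)
    (hmin : IsLocalMinOn (glObj S l) {Θ | Θ.PosDef} M)
    {N : Matrix (Fin p) (Fin p) ℝ} (hN : N.IsHermitian) :
    l * (offDiagL1 M - offDiagL1 N) ≤ ((S - M⁻¹) * (N - M)).trace := by
  have hline : Tendsto (fun t : ℝ ↦ M + t • (N - M)) (𝓝 0) (𝓝[{Θ | Θ.PosDef}] M) := by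
    refine tendsto_nhdsWithin_iff.2 ⟨?_, eventually_posDef_add_smul hM (hN.sub hM.1)⟩
    exact Continuous.tendsto' (by fun_prop) _ _ (by simp)
  have hmin_line := (hline.eventually hmin).filter_mono (nhdsWithin_le_nhds (s := Set.Ioi 0))
  simp only [glObj_eq] at hmin_line
  rw [mul_sub]
  exact sub_le_of_hasLineDerivAt_of_eventually_le (g := fun Θ ↦ l * offDiagL1 Θ)
    (hasLineDerivAt_gaussianNegLogLikelihood S hM.det_pos.ne' _) (convexOn_offDiagL1.smul hl)
    (Set.mem_univ _) (Set.mem_univ _) hmin_line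

/-- One G-ISTA iteration with step size `η`: a gradient step on the smooth part of the graphical
lasso objective, followed by the proximal operator of its penalty. -/
noncomputable def gistaStep (S : Matrix n n ℝ) (l η : ℝ) (Θ : Matrix n n ℝ) : Matrix n n ℝ :=
  softThOffDiag (η * l) (Θ - η • (S - Θ⁻¹))

lemma gistaStep_eq_self_of_isLocalMinOn (hS : S.IsHermitian) (hl : 0 ≤ l) (hM : M.PosDef)
    (hmin : IsLocalMinOn (glObj S l) {Θ | Θ.PosDef} M) {η : ℝ} (hη : 0 ≤ η) :
    gistaStep S l η M = M := by
  set G := S - M⁻¹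
  set N := gistaStep S l η M
  have hNherm : N.IsHermitian :=
    isHermitian_softThOffDiag _ (hM.1.sub ((hS.sub hM.1.inv).smul (.all η)))
  have hprox : ((M - η • G - N) * (M - N)ᵀ).trace ≤ η * l * (offDiagL1 M - offDiagL1 N) :=
    trace_sub_softThOffDiag_mul_le (mul_nonneg hη hl) (M - η • G) M
  have hopt : l * (offDiagL1 M - offDiagL1 N) ≤ (G * (N - M)).trace :=
    mul_offDiagL1_sub_le_trace_of_isLocalMinOn hl hM hmin hNherm
  have hsymm : (M - N)ᵀ = M - N := hM.1.sub hNherm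
  have hexpand : ((M - η • G - N) * (M - N)ᵀ).trace =
      ((M - N) * (M - N)ᵀ).trace + η * (G * (N - M)).trace := by
    rw [sub_right_comm, Matrix.sub_mul, trace_sub, Matrix.smul_mul, trace_smul, smul_eq_mul, hsymm,
      ← neg_sub N M, Matrix.mul_neg G, trace_neg]
    ring
  have hle : ((M - N) * (M - N)ᴴ).trace ≤ 0 := by
    rw [conjTranspose_eq_transpose_of_trivial]
    linarith [mul_le_mul_of_nonneg_left hopt hη]
  have hzero := hle.antisymm (posSemidef_self_mul_conjTranspose (M - N)).trace_nonneg
  exact (sub_eq_zero.1 (trace_mul_conjTranspose_self_eq_zero_iff.1 hzero)).symm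

open scoped Matrix.Norms.Frobenius in
lemma norm_gistaStep_sub_gistaStep_le (S : Matrix n n ℝ) {A B : Matrix n n ℝ} (hA : A.PosDef)
    (hB : B.PosDef) {l η a b : ℝ} (hl : 0 ≤ l) (hη : 0 ≤ η) (ha : 0 < a)
    (hAab : ∀ i, hA.1.eigenvalues i ∈ Set.Icc a b) (hBab : ∀ i, hB.1.eigenvalues i ∈ Set.Icc a b) :
    ‖gistaStep S l η A - gistaStep S l η B‖ ≤
      max |1 - η / b ^ 2| |1 - η / a ^ 2| * ‖A - B‖ := by
  calc ‖gistaStep S l η A - gistaStep S l η B‖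
      ≤ ‖(A - η • (S - A⁻¹)) - (B - η • (S - B⁻¹))‖ :=
        norm_softThOffDiag_sub_le (mul_nonneg hη hl) _ _
    _ = ‖(A + η • A⁻¹) - (B + η • B⁻¹)‖ := by
        congr 1
        module
    _ ≤ _ := frobenius_norm_add_smul_inv_sub_le hA hB hη ha hAab hBab

end Optimality

lemma mem_Icc_iInf_iSup {ι α : Type*} [Finite ι] [ConditionallyCompleteLattice α] (f : ι → α)
    (i : ι) : f i ∈ Set.Icc (⨅ j, f j) (⨆ j, f j) :=
  ⟨ciInf_le (Set.finite_range f).bddBelow i, le_ciSup (Set.finite_range f).bddAbove i⟩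

open scoped ComplexOrder in
lemma iInf_eigenvalues_pos {n 𝕜 : Type*} [Fintype n] [DecidableEq n] [Nonempty n] [RCLike 𝕜]
    {A : Matrix n n 𝕜} (hA : A.PosDef) : 0 < ⨅ i, hA.1.eigenvalues i := by
  obtain ⟨i, hi⟩ := exists_eq_ciInf_of_finite (f := hA.1.eigenvalues)
  exact hi ▸ hA.eigenvalues_pos i

theorem stmt4_general {p : ℕ} (hp : 0 < p)
    (S : Matrix (Fin p) (Fin p) ℝ) (hS : S.IsHermitian) (l : ℝ) (hl : 0 ≤ l)
    (Θs : Matrix (Fin p) (Fin p) ℝ) (hΘs : Θs.PosDef)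
    (hmin : IsLocalMinOn (glObj S l) {Θ | Θ.PosDef} Θs)
    (Θ : Matrix (Fin p) (Fin p) ℝ) (hΘ : Θ.PosDef)
    (η : ℝ) (hη : 0 ≤ η)
    (A Θ' : Matrix (Fin p) (Fin p) ℝ)
    (hA : A = Θ - η • (S - Θ⁻¹))
    (hΘ' : Θ' = Matrix.of fun i j => if i = j then A i j else softTh (η * l) (A i j))
    (a b γ : ℝ)
    (ha : a = min (⨅ i, hΘs.1.eigenvalues i) (⨅ i, hΘ.1.eigenvalues i))
    (hb : b = max (⨆ i, hΘs.1.eigenvalues i) (⨆ i, hΘ.1.eigenvalues i))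
    (hγ : γ = max |1 - η / b ^ 2| |1 - η / a ^ 2|) :
    frob (Θ' - Θs) ≤ γ * frob (Θ - Θs) := by
  have : Nonempty (Fin p) := ⟨⟨0, hp⟩⟩
  have ha_pos : 0 < a := ha ▸ lt_min (iInf_eigenvalues_pos hΘs) (iInf_eigenvalues_pos hΘ)
  have hΘs_mem (i) : hΘs.1.eigenvalues i ∈ Set.Icc a b :=
    Set.Icc_subset_Icc (ha ▸ min_le_left _ _) (hb ▸ le_max_left _ _) (mem_Icc_iInf_iSup _ i)
  have hΘ_mem (i) : hΘ.1.eigenvalues i ∈ Set.Icc a b :=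
    Set.Icc_subset_Icc (ha ▸ min_le_right _ _) (hb ▸ le_max_right _ _) (mem_Icc_iInf_iSup _ i)
  have hstep : Θ' = gistaStep S l η Θ := by rw [hΘ', hA]; rfl
  have hfix : gistaStep S l η Θs = Θs := gistaStep_eq_self_of_isLocalMinOn hS hl hΘs hmin hη
  rw [frob_eq_norm, frob_eq_norm, hstep, hγ]
  conv_lhs => rw [← hfix]
  exact norm_gistaStep_sub_gistaStep_le S hΘ hΘs hl hη ha_pos hΘ_mem hΘs_mem

/-- Contraction property of one ISTA step for the graphical lasso
(Lemma 3 of Guillot et al., G-ISTA). -/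
theorem stmt4 {p : ℕ} (hp : 0 < p)
    (S : Matrix (Fin p) (Fin p) ℝ) (hS : S.PosSemidef) (l : ℝ) (hl : 0 < l)
    (Θs : Matrix (Fin p) (Fin p) ℝ) (hΘs : Θs.PosDef)
    (hmin : ∀ Θ : Matrix (Fin p) (Fin p) ℝ, Θ.PosDef → glObj S l Θs ≤ glObj S l Θ)
    (Θ : Matrix (Fin p) (Fin p) ℝ) (hΘ : Θ.PosDef)
    (η : ℝ) (hη : 0 < η)
    (A Θ' : Matrix (Fin p) (Fin p) ℝ)
    (hA : A = Θ - η • (S - Θ⁻¹))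
    (hΘ' : Θ' = Matrix.of fun i j => if i = j then A i j else softTh (η * l) (A i j))
    (a b γ : ℝ)
    (ha : a = min (⨅ i, hΘs.1.eigenvalues i) (⨅ i, hΘ.1.eigenvalues i))
    (hb : b = max (⨆ i, hΘs.1.eigenvalues i) (⨆ i, hΘ.1.eigenvalues i))
    (hγ : γ = max |1 - η / b ^ 2| |1 - η / a ^ 2|) :
    frob (Θ' - Θs) ≤ γ * frob (Θ - Θs) :=
  stmt4_general hp S hS.1 l hl.le Θs hΘs (isMinOn_iff.2 hmin).localize Θ hΘ η hη.le A Θ' hA hΘ'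
    a b γ ha hb hγ
end
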